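/- arXiv:2406.20013 — 2 statements merged into one kernel-verified Lean document; each statement's English description precedes it below -/
import Mathlib

section
/- Let K and K′ be number fields contained in a fixed algebraic closure of ℚ, and let K·K′ denote their compositum. Then d_K divides d_{K·K′}, d_{K′} divides d_{K·K′} (hence lcm(d_K, d_{K′}) divides d_{K·K′}), and d_{K·K′} divides d_K^{[K′:ℚ]} · d_{K′}^{[K:ℚ]}. -/
open Module

lemma key_aux {K₁ K₂ L ι Ω : Type*} [Field K₁] [Field K₂] [Field L] [NumberField K₁] [NumberField K₂]
    [NumberField L] [Algebra K₁ L] [Algebra K₂ L] [Fintype ι] [DecidableEq ι]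
    [Field Ω] [IsAlgClosed Ω] [CharZero Ω] [Algebra L Ω] [Algebra K₁ Ω] [IsScalarTower K₁ L Ω]
    (h : (algebraMap K₁ L).fieldRange ⊔ (algebraMap K₂ L).fieldRange = ⊤)
    (b : Basis ι ℚ K₂) (x : L) :
    x = ∑ i, Algebra.trace K₁ L (x * algebraMap K₂ L (b i)) •
      algebraMap K₂ L (b.traceDual i) := by
  classical
  apply (algebraMap L Ω).injective
  let M : Matrix (K₂ →ₐ[ℚ] Ω) ι Ω := .of fun τ i => τ (b i)
  let N : Matrix ι (K₂ →ₐ[ℚ] Ω) Ω := .of fun i τ => τ (b.traceDual i)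
  have hNM : N * M = 1 := by
    ext i j
    have := trace_eq_sum_embeddings (K := ℚ) (L := K₂) Ω (x := b.traceDual i * b j)
    rw [b.trace_traceDual_mul] at this
    simp only [Matrix.mul_apply, M, N, Matrix.of_apply, Matrix.one_apply]
    simp only [map_mul] at this
    rw [← this]
    by_cases hij : j = i
    · simp [hij]
    · simp [hij, Ne.symm hij]
  have hc : Fintype.card ι = Fintype.card (K₂ →ₐ[ℚ] Ω) := by
    rw [AlgHom.card, Module.finrank_eq_card_basis b]
  have hMN : M * N = 1 := (Matrix.mul_eq_one_comm_of_card_eq _ _ _ hc).mp hNM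
  let r : (L →+* Ω) → (K₂ →ₐ[ℚ] Ω) := fun σ => (σ.comp (algebraMap K₂ L)).toRatAlgHom
  have hr (σ τ : L →+* Ω) : ∑ i, σ (algebraMap K₂ L (b i)) * τ (algebraMap K₂ L (b.traceDual i))
      = if r σ = r τ then 1 else 0 := by
    have := congr_fun (congr_fun hMN (r σ)) (r τ)
    rw [Matrix.mul_apply, Matrix.one_apply] at this
    exact this
  have hinj (σ τ : L →ₐ[K₁] Ω) (hst : r σ = r τ) : σ = τ := by
    have : (⊤ : Subfield L) ≤ RingHom.eqLocusField (σ : L →+* Ω) τ := by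
      rw [← h]
      refine sup_le ?_ ?_
      · rintro _ ⟨y, rfl⟩
        exact (σ.commutes y).trans (τ.commutes y).symm
      · rintro _ ⟨y, rfl⟩
        exact DFunLike.congr_fun hst y
    ext y
    exact this (Subfield.mem_top y)
  have e : algebraMap L Ω = ((Algebra.ofId L Ω).restrictScalars K₁ : L →ₐ[K₁] Ω) := rfl
  simp only [Algebra.smul_def, map_sum, map_mul, ← IsScalarTower.algebraMap_apply K₁ L Ω]
  simp only [trace_eq_sum_embeddings Ω, map_mul, Finset.sum_mul]
  rw [Finset.sum_comm]
  symm
  calc _ = ∑ σ : L →ₐ[K₁] Ω, σ x * if σ = (Algebra.ofId L Ω).restrictScalars K₁ then 1 else 0 := by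
        refine Finset.sum_congr rfl fun σ _ => ?_
        have := hr σ (algebraMap L Ω)
        simp only [mul_assoc]
        rw [← Finset.mul_sum]
        congr 1
        refine (Eq.trans ?_ this).trans ?_
        · rfl
        · congr 1
          rw [e]
          exact propext ⟨hinj _ _, fun h => by rw [h]⟩
    _ = _ := by
        simp

lemma key {K₁ K₂ L ι : Type*} [Field K₁] [Field K₂] [Field L] [NumberField K₁] [NumberField K₂]
    [NumberField L] [Algebra K₁ L] [Algebra K₂ L] [Fintype ι] [DecidableEq ι]
    (h : (algebraMap K₁ L).fieldRange ⊔ (algebraMap K₂ L).fieldRange = ⊤)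
    (b : Basis ι ℚ K₂) (x : L) :
    x = ∑ i, Algebra.trace K₁ L (x * algebraMap K₂ L (b i)) •
      algebraMap K₂ L (b.traceDual i) :=
  haveI : CharZero (AlgebraicClosure L) := charZero_of_injective_algebraMap (algebraMap L _).injective
  key_aux (Ω := AlgebraicClosure L) h b x

open NumberField FractionalIdeal Submodule nonZeroDivisors

lemma traceDual_le {K₁ K₂ L : Type*} [Field K₁] [Field K₂] [Field L] [NumberField K₁]
    [NumberField K₂] [NumberField L] [Algebra K₁ L] [Algebra K₂ L]
    (h : (algebraMap K₁ L).fieldRange ⊔ (algebraMap K₂ L).fieldRange = ⊤) :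
    traceDual (𝓞 K₁) K₁ (1 : Submodule (𝓞 L) L) ≤
      span (𝓞 L) (algebraMap K₂ L '' (traceDual ℤ ℚ (1 : Submodule (𝓞 K₂) K₂))) := by
  classical
  intro x hx
  let b := integralBasis K₂
  rw [key (K₁ := K₁) h b x]
  refine sum_mem fun i _ => ?_
  have h1 : Algebra.trace K₁ L (x * algebraMap K₂ L (b i)) ∈ (algebraMap (𝓞 K₁) K₁).range := by
    refine mem_traceDual.mp hx _ ?_
    rw [mem_one]
    refine ⟨algebraMap (𝓞 K₂) (𝓞 L) (RingOfIntegers.basis K₂ i), ?_⟩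
    rw [integralBasis_apply]
    rfl
  obtain ⟨c, hc⟩ := h1
  have h2 : algebraMap K₂ L (b.traceDual i) ∈
      span (𝓞 L) (algebraMap K₂ L '' (traceDual ℤ ℚ (1 : Submodule (𝓞 K₂) K₂))) := by
    refine subset_span ⟨_, ?_, rfl⟩
    rw [SetLike.mem_coe, ← Submodule.restrictScalars_mem ℤ, 
      traceDual_span_of_basis ℤ (1 : Submodule (𝓞 K₂) K₂) b
      (by ext y; rw [mem_span_integralBasis]; simp)]
    exact subset_span ⟨i, rfl⟩
  rw [← hc]
  convert Submodule.smul_mem _ (algebraMap (𝓞 K₁) (𝓞 L) c) h2 using 1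
  rw [Algebra.smul_def, Algebra.smul_def]
  rfl

lemma different_dvd {K₁ K₂ L : Type*} [Field K₁] [Field K₂] [Field L] [NumberField K₁]
    [NumberField K₂] [NumberField L] [Algebra K₁ L] [Algebra K₂ L]
    (h : (algebraMap K₁ L).fieldRange ⊔ (algebraMap K₂ L).fieldRange = ⊤) :
    differentIdeal (𝓞 K₁) (𝓞 L) ∣
      Ideal.map (algebraMap (𝓞 K₂) (𝓞 L)) (differentIdeal ℤ (𝓞 K₂)) := by
  rw [Ideal.dvd_iff_le, ← coeIdeal_le_coeIdeal L, coeIdeal_differentIdeal (𝓞 K₁) K₁ L (𝓞 L),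
    ← extendedHom_coeIdeal_eq_map L (𝓞 L) (K := K₂), le_inv_comm _ (by simp), ← map_inv₀,
    coeIdeal_differentIdeal ℤ ℚ, inv_inv, ← coe_le_coe, coe_dual_one, coe_extendedHom_eq_span,
    ← coeToSet_coeToSubmodule, coe_dual_one]
  · exact traceDual_le h
  · exact (_root_.map_ne_zero _).mpr <| coeIdeal_eq_zero.not.mpr differentIdeal_ne_bot

lemma discr_dvd_aux {K₁ K₂ L : Type*} [Field K₁] [Field K₂] [Field L] [NumberField K₁]
    [NumberField K₂] [NumberField L] [Algebra K₁ L] [Algebra K₂ L]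
    (h : (algebraMap K₁ L).fieldRange ⊔ (algebraMap K₂ L).fieldRange = ⊤)
    (hle : finrank ℚ L ≤ finrank ℚ K₁ * finrank ℚ K₂) :
    (discr L).natAbs ∣ (discr K₁).natAbs ^ finrank ℚ K₂ * (discr K₂).natAbs ^ finrank ℚ K₁ := by
  have h1 : finrank K₁ L ≤ finrank ℚ K₂ := by
    rw [← finrank_mul_finrank ℚ K₁ L] at hle
    exact Nat.le_of_mul_le_mul_left hle finrank_pos
  have h2 : finrank K₂ L ≤ finrank ℚ K₁ := by
    rw [← finrank_mul_finrank ℚ K₂ L, mul_comm] at hle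
    exact Nat.le_of_mul_le_mul_right hle finrank_pos
  rw [natAbs_discr_eq_absNorm_differentIdeal_mul_natAbs_discr_pow K₁ (𝓞 K₁) L (𝓞 L), mul_comm]
  refine mul_dvd_mul (pow_dvd_pow _ h1) ?_
  refine dvd_trans ?_ (pow_dvd_pow _ h2)
  have := Ideal.absNorm_dvd_absNorm_of_le (Ideal.dvd_iff_le.mp (different_dvd h))
  let _ : Algebra (FractionRing (𝓞 K₂)) (FractionRing (𝓞 L)) := FractionRing.liftAlgebra _ _
  rwa [Ideal.absNorm_algebraMap, absNorm_differentIdeal K₂,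
    ← IsFractionRing.finrank_eq (𝓞 K₂) K₂ (𝓞 L) L] at this


/-- For number fields `K`, `K'` inside a fixed algebraic closure of `ℚ`, with compositum
`K ⊔ K'`: `d_K ∣ d_{K·K'}`, `d_{K'} ∣ d_{K·K'}` (hence `lcm(d_K, d_{K'}) ∣ d_{K·K'}`), and
`d_{K·K'} ∣ d_K ^ [K':ℚ] * d_{K'} ^ [K:ℚ]`. -/
theorem discr_compositum_dvd (K K' : IntermediateField ℚ (AlgebraicClosure ℚ))
    [NumberField ↥K] [NumberField ↥K'] [NumberField ↥(K ⊔ K')] :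
    (NumberField.discr ↥K).natAbs ∣ (NumberField.discr ↥(K ⊔ K')).natAbs ∧
    (NumberField.discr ↥K').natAbs ∣ (NumberField.discr ↥(K ⊔ K')).natAbs ∧
    Nat.lcm (NumberField.discr ↥K).natAbs (NumberField.discr ↥K').natAbs ∣
      (NumberField.discr ↥(K ⊔ K')).natAbs ∧
    (NumberField.discr ↥(K ⊔ K')).natAbs ∣
      (NumberField.discr ↥K).natAbs ^ (Module.finrank ℚ ↥K') *
        (NumberField.discr ↥K').natAbs ^ (Module.finrank ℚ ↥K) := by

  let _ : Algebra K ↥(K ⊔ K') :=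
    (IntermediateField.inclusion (le_sup_left : K ≤ K ⊔ K')).toRingHom.toAlgebra
  let _ : Algebra K' ↥(K ⊔ K') :=
    (IntermediateField.inclusion (le_sup_right : K' ≤ K ⊔ K')).toRingHom.toAlgebra
  have d1 := Int.natAbs_dvd_natAbs.mpr (NumberField.discr_dvd_discr K ↥(K ⊔ K'))
  have d2 := Int.natAbs_dvd_natAbs.mpr (NumberField.discr_dvd_discr K' ↥(K ⊔ K'))
  refine ⟨d1, d2, Nat.lcm_dvd d1 d2, discr_dvd_aux ?_ (IntermediateField.finrank_sup_le K K')⟩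
  rw [eq_top_iff]
  set S := (algebraMap K ↥(K ⊔ K')).fieldRange ⊔ (algebraMap K' ↥(K ⊔ K')).fieldRange with hS
  let T : IntermediateField ℚ (AlgebraicClosure ℚ) :=
    (S.map (algebraMap ↥(K ⊔ K') (AlgebraicClosure ℚ))).toIntermediateField
      (fun q => by simp)
  have hT : K ⊔ K' ≤ T := by
    refine sup_le ?_ ?_
    · intro y hy
      exact ⟨algebraMap K ↥(K ⊔ K') ⟨y, hy⟩,
        (le_sup_left : _ ≤ S) ⟨_, rfl⟩, rfl⟩
    · intro y hy
      exact ⟨algebraMap K' ↥(K ⊔ K') ⟨y, hy⟩,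
        (le_sup_right : _ ≤ S) ⟨_, rfl⟩, rfl⟩
  intro y _
  obtain ⟨z, hz, hzy⟩ := hT y.2
  have : z = y := Subtype.ext hzy
  exact this ▸ hz
end

section
/- Let L₁, …, L_f be number fields contained in a fixed algebraic closure of ℚ, and let L₁⋯L_f denote their compositum. Then d_{L₁⋯L_f} ≤ (d_{L₁} · d_{L₂} ⋯ d_{L_f})^{[L₁:ℚ]·[L₂:ℚ]⋯[L_f:ℚ]}. -/
namespace CompositumAux

open FractionalIdeal nonZeroDivisors IntermediateField Algebra Module Submodule NumberField

theorem aux_trace_expand {K L ι : Type*} [Field K] [Field L] [Algebra K L] [FiniteDimensional K L]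
    [Algebra.IsSeparable K L] [Fintype ι] [DecidableEq ι] (F₁ F₂ : IntermediateField K L)
    (h : F₁ ⊔ F₂ = ⊤) (b : Basis ι K F₂) (x : L) :
    x = ∑ i, Algebra.trace F₁ L (x * (b i : L)) • (b.traceDual i : L) := by
  classical
  let E := AlgebraicClosure L
  apply FaithfulSMul.algebraMap_injective L E
  let P : Matrix ι (F₂ →ₐ[K] E) E := fun i σ ↦ σ (b i)
  let Q : Matrix (F₂ →ₐ[K] E) ι E := fun σ i ↦ σ (b.traceDual i)
  have hcard : Fintype.card ι = Fintype.card (F₂ →ₐ[K] E) := by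
    rw [AlgHom.card K F₂ E, Module.finrank_eq_card_basis b]
  have hPQ : P * Q = 1 := by
    ext i j
    have := congrArg (algebraMap K E) (b.trace_mul_traceDual i j)
    rw [trace_eq_sum_embeddings E] at this
    simp only [map_mul] at this
    rw [Matrix.one_apply, Matrix.mul_apply]
    refine Eq.trans ?_ (this.trans ?_)
    · exact Finset.sum_congr rfl fun σ _ ↦ by simp [P, Q]
    · by_cases hij : i = j
      · simp [hij]
      · simp [hij]
  have hQP : Q * P = 1 := (Matrix.mul_eq_one_comm_of_card_eq _ _ _ hcard).mp hPQ
  let r : (L →ₐ[F₁] E) → (F₂ →ₐ[K] E) := fun σ ↦ (σ.restrictScalars K).comp F₂.val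
  let σ₀ : L →ₐ[F₁] E := IsScalarTower.toAlgHom F₁ L E
  have hr : Function.Injective r := by
    intro σ τ hst
    have h3 : F₁.toSubalgebra ⊔ F₂.toSubalgebra ≤
        AlgHom.equalizer (σ.restrictScalars K) (τ.restrictScalars K) := by
      refine sup_le (fun y hy ↦ ?_) (fun y hy ↦ ?_)
      · exact (σ.commutes ⟨y, hy⟩).trans (τ.commutes ⟨y, hy⟩).symm
      · exact DFunLike.congr_fun hst ⟨y, hy⟩
    have h2 : F₁.toSubalgebra ⊔ F₂.toSubalgebra = ⊤ := by
      simpa [sup_toSubalgebra_of_isAlgebraic_right] using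
        congr_arg IntermediateField.toSubalgebra h
    rw [h2] at h3
    ext y
    exact h3 (Algebra.mem_top (x := y))
  have key (σ : L →ₐ[F₁] E) : ∑ i, σ (b i : L) * algebraMap L E (b.traceDual i : L)
      = if σ₀ = σ then 1 else 0 := by
    have := congrFun (congrFun hQP (r σ₀)) (r σ)
    rw [Matrix.one_apply, Matrix.mul_apply] at this
    simp only [hr.eq_iff] at this
    rw [← this]
    refine Finset.sum_congr rfl fun i _ ↦ ?_
    rw [mul_comm]; rfl
  have h2 (i : ι) : algebraMap L E (Algebra.trace F₁ L (x * (b i : L)) • (b.traceDual i : L))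
      = ∑ σ : L →ₐ[F₁] E, σ x * (σ (b i : L) * algebraMap L E (b.traceDual i : L)) := by
    rw [Algebra.smul_def, map_mul, ← IsScalarTower.algebraMap_apply, trace_eq_sum_embeddings E,
      Finset.sum_mul]
    simp only [map_mul, mul_assoc]
  rw [map_sum]
  simp only [h2]
  rw [Finset.sum_comm]
  simp only [← Finset.mul_sum, key]
  simp [σ₀]

theorem aux_different {L : Type*} [Field L] [NumberField L] (F₁ F₂ : IntermediateField ℚ L)
    (h : F₁ ⊔ F₂ = ⊤) :
    differentIdeal (𝓞 F₁) (𝓞 L) ∣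
      Ideal.map (algebraMap (𝓞 F₂) (𝓞 L)) (differentIdeal ℤ (𝓞 F₂)) := by
  have hle : (traceDual (𝓞 F₁) F₁ (1 : Submodule (𝓞 L) L)).restrictScalars (𝓞 F₁) ≤
      span (𝓞 F₁) (algebraMap F₂ L '' (traceDual ℤ ℚ (1 : Submodule (𝓞 F₂) F₂))) := by
    classical
    intro x hx
    let b := integralBasis F₂
    rw [aux_trace_expand F₁ F₂ h b x]
    refine Submodule.sum_mem _ fun i _ ↦ ?_
    obtain ⟨c, hc⟩ : Algebra.trace F₁ L (x * (b i : L)) ∈ (algebraMap (𝓞 F₁) F₁).range := by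
      refine mem_traceDual.mp hx _ ?_
      rw [Submodule.mem_one]
      refine ⟨algebraMap (𝓞 F₂) (𝓞 L) (RingOfIntegers.basis F₂ i), ?_⟩
      rw [integralBasis_apply]
      rfl
    rw [← hc, algebraMap_smul]
    refine Submodule.smul_mem _ _ (subset_span ⟨b.traceDual i, ?_, rfl⟩)
    have hb : Submodule.span ℤ (Set.range b) = (1 : Submodule (𝓞 F₂) F₂).restrictScalars ℤ := by
      ext y
      rw [mem_span_integralBasis]
      simp 
    have := traceDual_span_of_basis ℤ (1 : Submodule (𝓞 F₂) F₂) b hb.symm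
    have h3 : b.traceDual i ∈ (traceDual ℤ ℚ (1 : Submodule (𝓞 F₂) F₂)).restrictScalars ℤ := by
      rw [this]; exact subset_span ⟨i, rfl⟩
    exact h3
  rw [Ideal.dvd_iff_le, ← coeIdeal_le_coeIdeal L, coeIdeal_differentIdeal (𝓞 F₁) F₁ L (𝓞 L),
    ← extendedHom_coeIdeal_eq_map L (𝓞 L) (K := F₂), le_inv_comm _ (by simp), ← map_inv₀,
    coeIdeal_differentIdeal ℤ ℚ, inv_inv, ← coe_le_coe, coe_dual_one, coe_extendedHom_eq_span,
    ← coeToSet_coeToSubmodule, coe_dual_one]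
  · have := Submodule.span_mono (R := 𝓞 L) hle
    rwa [← span_coe_eq_restrictScalars, span_span_of_tower, span_span_of_tower, span_eq] at this
  · exact (_root_.map_ne_zero _).mpr <| coeIdeal_eq_zero.not.mpr differentIdeal_ne_bot

theorem aux_discr {L : Type*} [Field L] [NumberField L] (F₁ F₂ : IntermediateField ℚ L)
    (h : F₁ ⊔ F₂ = ⊤) :
    (discr L).natAbs ≤ (discr F₁).natAbs ^ finrank ℚ F₂ * (discr F₂).natAbs ^ finrank ℚ F₁ := by
  have hd := aux_different F₁ F₂ h
  have h1 := natAbs_discr_eq_absNorm_differentIdeal_mul_natAbs_discr_pow F₁ (𝓞 F₁) L (𝓞 L)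
  have h2 := map_dvd Ideal.absNorm hd
  rw [Ideal.absNorm_algebraMap, absNorm_differentIdeal F₂,
    ← IsFractionRing.finrank_eq (𝓞 F₂) F₂ (𝓞 L) L] at h2
  have p1 : 0 < (discr F₁).natAbs := Int.natAbs_pos.mpr (discr_ne_zero _)
  have p2 : 0 < (discr F₂).natAbs := Int.natAbs_pos.mpr (discr_ne_zero _)
  have h3 := Nat.le_of_dvd (by positivity) h2
  have hf : finrank ℚ L ≤ finrank ℚ F₁ * finrank ℚ F₂ := by
    have := IntermediateField.finrank_sup_le F₁ F₂
    rwa [h, IntermediateField.finrank_top'] at this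
  have f1 : finrank F₁ L ≤ finrank ℚ F₂ := by
    rw [← finrank_mul_finrank ℚ F₁ L] at hf
    exact Nat.le_of_mul_le_mul_left hf finrank_pos
  have f2 : finrank F₂ L ≤ finrank ℚ F₁ := by
    rw [← finrank_mul_finrank ℚ F₂ L, mul_comm] at hf
    exact Nat.le_of_mul_le_mul_right hf finrank_pos
  rw [h1, mul_comm]
  exact Nat.mul_le_mul (Nat.pow_le_pow_right p1 f1) (h3.trans (Nat.pow_le_pow_right p2 f2))

theorem aux_discr' {L G₁ G₂ : Type*} [Field L] [NumberField L] [Field G₁] [NumberField G₁]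
    [Field G₂] [NumberField G₂] (F₁ F₂ : IntermediateField ℚ L)
    (h : F₁ ⊔ F₂ = ⊤) (e₁ : G₁ ≃+* F₁) (e₂ : G₂ ≃+* F₂) :
    (NumberField.discr L).natAbs ≤
      (NumberField.discr G₁).natAbs ^ finrank ℚ G₂ *
        (NumberField.discr G₂).natAbs ^ finrank ℚ G₁ := by
  have := aux_discr F₁ F₂ h
  have f₁ : finrank ℚ G₁ = finrank ℚ F₁ :=
    (e₁.toAddEquiv.toLinearEquiv (fun c x ↦ map_rat_smul e₁ c x)).finrank_eq
  have f₂ : finrank ℚ G₂ = finrank ℚ F₂ :=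
    (e₂.toAddEquiv.toLinearEquiv (fun c x ↦ map_rat_smul e₂ c x)).finrank_eq
  rwa [discr_eq_discr_of_ringEquiv _ e₁, discr_eq_discr_of_ringEquiv _ e₂, f₁, f₂]

theorem aux_discr_sup {Ω : Type*} [Field Ω] [CharZero Ω] (F₁ F₂ M : IntermediateField ℚ Ω)
    [NumberField F₁] [NumberField F₂] [NumberField M] (h : M = F₁ ⊔ F₂) :
    (discr M).natAbs ≤ (discr F₁).natAbs ^ finrank ℚ F₂ * (discr F₂).natAbs ^ finrank ℚ F₁ := by
  have h1 : F₁ ≤ M := h ▸ le_sup_left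
  have h2 : F₂ ≤ M := h ▸ le_sup_right
  have hs : IntermediateField.restrict h1 ⊔ IntermediateField.restrict h2 = ⊤ := by
    apply IntermediateField.lift_injective M
    rw [IntermediateField.lift_sup, IntermediateField.lift_restrict,
      IntermediateField.lift_restrict, IntermediateField.lift_top, h]
  exact aux_discr' _ _ hs (IntermediateField.restrictAlgEquiv h1).toRingEquiv
    (IntermediateField.restrictAlgEquiv h2).toRingEquiv

theorem aux_induction {ι Ω : Type*} [Field Ω] [CharZero Ω]
    (L : ι → IntermediateField ℚ Ω) [∀ i, NumberField (L i)] (s : Finset ι) :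
    ∀ (M : IntermediateField ℚ Ω) [NumberField M], M = s.sup L →
      finrank ℚ M ≤ ∏ i ∈ s, finrank ℚ (L i) ∧
      (discr M).natAbs ≤ (∏ i ∈ s, (discr (L i)).natAbs) ^ (∏ i ∈ s, finrank ℚ (L i)) := by
  classical
  induction s using Finset.induction_on with
  | empty =>
    intro M _ hM
    rw [Finset.sup_empty] at hM
    subst hM
    have := discr_eq_discr_of_algEquiv _ (IntermediateField.botEquiv ℚ Ω)
    simp [this]
  | insert a s ha ih =>
    intro M _ hM
    rw [Finset.sup_insert] at hM
    have : FiniteDimensional ℚ M := inferInstance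
    have hle : s.sup L ≤ M := hM ▸ le_sup_right
    have : FiniteDimensional ℚ ↥(s.sup L) :=
      Module.Finite.of_injective (IntermediateField.inclusion hle).toLinearMap
        (IntermediateField.inclusion hle).injective
    have : NumberField ↥(s.sup L) := { to_charZero := inferInstance, to_finiteDimensional := this }
    obtain ⟨ih1, ih2⟩ := ih (s.sup L) rfl
    have key := aux_discr_sup _ _ M hM
    rw [Finset.prod_insert ha, Finset.prod_insert ha]
    constructor
    · rw [hM]
      exact (IntermediateField.finrank_sup_le _ _).trans (Nat.mul_le_mul_left _ ih1)
    · have p1 : 0 < (NumberField.discr (L a)).natAbs := Int.natAbs_pos.mpr (discr_ne_zero _)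
      have hn : 0 < finrank ℚ (L a) := finrank_pos
      refine key.trans ?_
      rw [mul_pow]
      refine Nat.mul_le_mul (Nat.pow_le_pow_right p1 (ih1.trans (Nat.le_mul_of_pos_left _ hn))) ?_
      refine (Nat.pow_le_pow_left ih2 _).trans ?_
      rw [← pow_mul, mul_comm (finrank ℚ (L a))]

end CompositumAux

/-- For number fields `L 1, …, L f` inside a fixed algebraic closure of `ℚ`, the absolute
discriminant of their compositum is at most
`(d_{L 1} ⋯ d_{L f}) ^ ([L 1 : ℚ] ⋯ [L f : ℚ])`. -/
theorem discr_compositum_le (f : ℕ) (L : Fin f → IntermediateField ℚ (AlgebraicClosure ℚ))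
    [∀ i, NumberField ↥(L i)] [NumberField ↥(⨆ i, L i)] :
    (NumberField.discr ↥(⨆ i, L i)).natAbs ≤
      (∏ i, (NumberField.discr ↥(L i)).natAbs) ^ (∏ i, Module.finrank ℚ ↥(L i)) := by
  have hM : (⨆ i, L i) = Finset.univ.sup L := by
    rw [Finset.sup_univ_eq_iSup]
  exact (CompositumAux.aux_induction L Finset.univ _ hM).2
end
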